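/- Let p be an odd prime, let G = ℚ_p^× be the multiplicative group of the field of p-adic numbers, and let N be the set of open finite-index subgroups of G. Then C(G) ∖ N is homeomorphic to the space obtained by glueing [d(p−1)] × ℕ̄ onto the Cantor space C: that is, there exist d(p−1) pairwise distinct points c_1, …, c_{d(p−1)} of C such that C(G) ∖ N is homeomorphic to the quotient of the disjoint union C ⊔ ([d(p−1)] × ℕ̄) obtained by identifying, for each i, the accumulation point (i, ∞) with c_i. -/

import Mathlib

open OnePoint

/-- The Chabauty space of a topological group `G`: the set of closed subgroups of `G`. -/
def ChabautySpace (G : Type*) [Group G] [TopologicalSpace G] : Type _ :=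
  {H : Subgroup G // IsClosed (H : Set G)}

/-- The Chabauty topology on the space of closed subgroups, generated by the sets
`O_K = {H | H ∩ K = ∅}` for `K` compact and `O'_U = {H | H ∩ U ≠ ∅}` for `U` open. -/
instance ChabautySpace.instTopologicalSpace (G : Type*) [Group G] [TopologicalSpace G] :
    TopologicalSpace (ChabautySpace G) :=
  TopologicalSpace.generateFrom
    ({S | ∃ K : Set G, IsCompact K ∧ S = {H : ChabautySpace G | (H.1 : Set G) ∩ K = ∅}} ∪
     {S | ∃ U : Set G, IsOpen U ∧ S = {H : ChabautySpace G | ((H.1 : Set G) ∩ U).Nonempty}})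

section Cantor

variable {X : Type*}

/-- The levels at which the tree spanned by `Set.range e` branches along the branch `e x`. -/
def branchLevels (e : X → ℕ → Bool) (x : X) : Set ℕ :=
  {n | ∃ y, (∀ m < n, e y m = e x m) ∧ e y n ≠ e x n}

theorem mem_branchLevels_of_agree {e : X → ℕ → Bool} {x y : X} {n : ℕ}
    (h : ∀ m < n, e y m = e x m) (hn : n ∈ branchLevels e x) : n ∈ branchLevels e y := by
  obtain ⟨z, hz, hzn⟩ := hn
  by_cases hy : e y n = e x n
  · exact ⟨z, fun m hm => (hz m hm).trans (h m hm).symm, by rwa [hy]⟩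
  · exact ⟨x, fun m hm => (h m hm).symm, Ne.symm hy⟩

theorem mem_branchLevels_congr {e : X → ℕ → Bool} {x y : X} {n : ℕ}
    (h : ∀ m < n, e y m = e x m) : n ∈ branchLevels e y ↔ n ∈ branchLevels e x :=
  ⟨mem_branchLevels_of_agree fun m hm => (h m hm).symm, mem_branchLevels_of_agree h⟩

open Classical in
theorem count_branchLevels_congr {e : X → ℕ → Bool} {x y : X} {n : ℕ}
    (h : ∀ m < n, e y m = e x m) :
    Nat.count (· ∈ branchLevels e y) n = Nat.count (· ∈ branchLevels e x) n := by
  induction n with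
  | zero => simp
  | succ n ih =>
    rw [Nat.count_succ, Nat.count_succ, ih fun m hm => h m (by omega)]
    simp only [mem_branchLevels_congr fun m hm => h m (Nat.lt_succ_of_lt hm)]

open Classical in
theorem nth_branchLevels_congr {e : X → ℕ → Bool} {x y : X} {k : ℕ}
    (hx : (branchLevels e x).Infinite)
    (h : ∀ m < Nat.nth (· ∈ branchLevels e x) k, e y m = e x m) :
    Nat.nth (· ∈ branchLevels e y) k = Nat.nth (· ∈ branchLevels e x) k := by
  have hmem := Nat.nth_mem_of_infinite (p := (· ∈ branchLevels e x)) hx k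
  have hcount := count_branchLevels_congr h
  rw [Nat.count_nth_of_infinite (p := (· ∈ branchLevels e x)) hx] at hcount
  conv_lhs => rw [← hcount]
  exact Nat.nth_count ((mem_branchLevels_congr h).2 hmem)

/-- The sequence of directions taken by the branch `e x` at its branching levels. -/
noncomputable def branchCode (e : X → ℕ → Bool) (x : X) (k : ℕ) : Bool :=
  e x (Nat.nth (· ∈ branchLevels e x) k)

theorem exists_first_ne {f g : ℕ → Bool} (h : f ≠ g) :
    ∃ n, (∀ m < n, f m = g m) ∧ f n ≠ g n := by
  classical
  have h' : ∃ n, f n ≠ g n := Function.ne_iff.1 h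
  exact ⟨Nat.find h', fun m hm => not_not.1 (Nat.find_min h' hm), Nat.find_spec h'⟩

theorem isOpen_agree [TopologicalSpace X] {e : X → ℕ → Bool} (he : Continuous e) (x : X) (n : ℕ) :
    IsOpen {y | ∀ m < n, e y m = e x m} := by
  have : {y | ∀ m < n, e y m = e x m} = ⋂ m ∈ Set.Iio n, (fun y => e y m) ⁻¹' {e x m} := by
    ext; simp
  rw [this]
  exact (Set.finite_Iio n).isOpen_biInter fun m _ =>
    (isOpen_discrete _).preimage ((continuous_apply m).comp he)

theorem infinite_branchLevels [TopologicalSpace X] {e : X → ℕ → Bool} (he : Continuous e)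
    (hinj : Function.Injective e) {x : X} (hx : ¬IsOpen {x}) : (branchLevels e x).Infinite := by
  intro hfin
  obtain ⟨N, hN⟩ := hfin.bddAbove
  refine hx ?_
  convert isOpen_agree he x (N + 1) using 1
  ext y
  refine ⟨by rintro rfl; simp, fun hy => ?_⟩
  by_contra hne
  obtain ⟨n, hn, hn'⟩ := exists_first_ne (hinj.ne hne)
  exact hn' (hy n (Nat.lt_succ_of_le (hN ⟨y, hn, hn'⟩)))

/-- **Brouwer's theorem**: a nonempty compact space without isolated points that injects
continuously into the Cantor space is homeomorphic to the Cantor space. -/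
theorem nonempty_homeomorph_cantor [TopologicalSpace X] [CompactSpace X] [Nonempty X]
    {e : X → ℕ → Bool} (he : Continuous e) (hinj : Function.Injective e)
    (hperf : ∀ x : X, ¬IsOpen {x}) : Nonempty (X ≃ₜ (ℕ → Bool)) := by
  classical
  have hinf : ∀ x, (branchLevels e x).Infinite := fun x => infinite_branchLevels he hinj (hperf x)
  have hcont : Continuous (branchCode e) := by
    refine continuous_pi fun k =>
      (IsLocallyConstant.iff_exists_open _).2 (fun x => ?_) |>.continuous
    refine ⟨_, isOpen_agree he x (Nat.nth (· ∈ branchLevels e x) k + 1), by simp, fun y hy => ?_⟩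
    rw [branchCode, nth_branchLevels_congr (hinf x) fun m hm => hy m (by omega)]
    exact hy _ (Nat.lt_succ_self _)
  have hinj' : Function.Injective (branchCode e) := by
    intro x y hxy
    by_contra hne
    obtain ⟨n, hn, hn'⟩ := exists_first_ne (hinj.ne hne)
    have hny : n ∈ branchLevels e y := ⟨x, hn, hn'⟩
    have hnx : n ∈ branchLevels e x := mem_branchLevels_of_agree hn hny
    have h := congrFun hxy (Nat.count (· ∈ branchLevels e x) n)
    simp only [branchCode] at h
    rw [Nat.nth_count (p := (· ∈ branchLevels e x)) hnx, count_branchLevels_congr hn,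
      Nat.nth_count (p := (· ∈ branchLevels e y)) hny] at h
    exact hn' h
  have happrox : ∀ (t : ℕ → Bool) (k : ℕ), ∃ x, ∀ j < k, branchCode e x j = t j := by
    intro t k
    induction k with
    | zero => exact ⟨Classical.arbitrary X, by simp⟩
    | succ k ih =>
      obtain ⟨x, hx⟩ := ih
      by_cases hk : branchCode e x k = t k
      · refine ⟨x, fun j hj => ?_⟩
        rcases Nat.lt_succ_iff_lt_or_eq.1 hj with hj | rfl
        exacts [hx j hj, hk]
      · obtain ⟨y, hy, hy'⟩ := Nat.nth_mem_of_infinite (p := (· ∈ branchLevels e x)) (hinf x) k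
        refine ⟨y, fun j hj => ?_⟩
        rcases Nat.lt_succ_iff_lt_or_eq.1 hj with hj | rfl
        · have hlt := Nat.nth_strictMono (hinf x) hj
          rw [← hx j hj, branchCode,
            nth_branchLevels_congr (hinf x) fun m hm => hy m (hm.trans hlt)]
          exact hy _ hlt
        · rw [branchCode, nth_branchLevels_congr (hinf x) hy]
          simp only [branchCode] at hk
          revert hy' hk
          generalize e y _ = a
          generalize e x _ = b
          generalize t j = c
          revert a b c
          decide
  have hsurj : Function.Surjective (branchCode e) := by
    rw [← Set.range_eq_univ, ← (isCompact_range hcont).isClosed.closure_eq]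
    refine Set.eq_univ_of_forall fun t => mem_closure_iff.2 fun U hU htU => ?_
    obtain ⟨I, u, hu, hIU⟩ := isOpen_pi_iff.1 hU t htU
    obtain ⟨x, hx⟩ := happrox t (I.sup id + 1)
    refine ⟨_, hIU fun j hj => ?_, x, rfl⟩
    rw [hx j (Nat.lt_succ_of_le (Finset.le_sup (f := id) hj))]
    exact (hu j hj).2
  exact ⟨hcont.homeoOfEquivCompactToT2 (f := Equiv.ofBijective _ ⟨hinj', hsurj⟩)⟩

end Cantor

namespace ChabautySpace

variable {G : Type*} [Group G] [TopologicalSpace G]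

theorem isOpen_setOf_inter_eq_empty {K : Set G} (hK : IsCompact K) :
    IsOpen {H : ChabautySpace G | (H.1 : Set G) ∩ K = ∅} :=
  TopologicalSpace.isOpen_generateFrom_of_mem (Or.inl ⟨K, hK, rfl⟩)

theorem isOpen_setOf_inter_nonempty {U : Set G} (hU : IsOpen U) :
    IsOpen {H : ChabautySpace G | ((H.1 : Set G) ∩ U).Nonempty} :=
  TopologicalSpace.isOpen_generateFrom_of_mem (Or.inr ⟨U, hU, rfl⟩)

theorem isClopen_setOf_inter_nonempty {U : Set G} (hU : IsOpen U) (hK : IsCompact U) :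
    IsClopen {H : ChabautySpace G | ((H.1 : Set G) ∩ U).Nonempty} := by
  refine ⟨⟨?_⟩, isOpen_setOf_inter_nonempty hU⟩
  convert isOpen_setOf_inter_eq_empty hK using 1
  ext H
  simp [Set.not_nonempty_iff_eq_empty]

theorem isTopologicalBasis_isOpen_isCompact (X : Type*) [TopologicalSpace X] [T2Space X]
    [LocallyCompactSpace X] [TotallyDisconnectedSpace X] :
    TopologicalSpace.IsTopologicalBasis {U : Set X | IsOpen U ∧ IsCompact U} := by
  refine TopologicalSpace.isTopologicalBasis_of_isOpen_of_nhds (fun U hU => hU.1)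
    fun x U hx hU => ?_
  obtain ⟨K, hK, hxK, hKU⟩ := exists_compact_subset hU hx
  obtain ⟨W, hW, hxW, hWK⟩ :=
    (loc_compact_Haus_tot_disc_of_zero_dim (H := X)).mem_nhds_iff.1 (isOpen_interior.mem_nhds hxK)
  exact ⟨W, ⟨hW.isOpen, hK.of_isClosed_subset hW.isClosed (hWK.trans interior_subset)⟩, hxW,
    (hWK.trans interior_subset).trans hKU⟩

theorem exists_continuous_injective (G : Type*) [Group G] [TopologicalSpace G] [T2Space G]
    [LocallyCompactSpace G] [TotallyDisconnectedSpace G] [SecondCountableTopology G] :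
    ∃ e : ChabautySpace G → ℕ → Bool, Continuous e ∧ Function.Injective e := by
  classical
  obtain ⟨B, hB, hBc, hBasis⟩ := (isTopologicalBasis_isOpen_isCompact G).exists_countable
  obtain ⟨x, hx, -⟩ := hBasis.exists_subset_of_mem_open (Set.mem_univ (1 : G)) isOpen_univ
  obtain ⟨V, hV⟩ := hBc.exists_eq_range ⟨x, hx⟩
  have hVB : ∀ n, V n ∈ B := fun n => hV ▸ Set.mem_range_self n
  have hle : ∀ H H' : ChabautySpace G,
      (∀ n, ((H.1 : Set G) ∩ V n).Nonempty → ((H'.1 : Set G) ∩ V n).Nonempty) → H.1 ≤ H'.1 := by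
    intro H H' h g hg
    by_contra hg'
    obtain ⟨W, hW, hgW, hWH⟩ := hBasis.exists_subset_of_mem_open
      (show g ∈ (H'.1 : Set G)ᶜ from hg') H'.2.isOpen_compl
    obtain ⟨n, rfl⟩ := hV ▸ hW
    obtain ⟨y, hy, hyW⟩ := h n ⟨g, hg, hgW⟩
    exact hWH hyW hy
  refine ⟨fun H n => decide ((H.1 : Set G) ∩ V n).Nonempty, continuous_pi fun n => ?_,
    fun H H' h => ?_⟩
  · have hc := isClopen_setOf_inter_nonempty (hB (hVB n)).1 (hB (hVB n)).2
    refine continuous_discrete_rng.2 fun b => ?_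
    cases b
    · convert hc.compl.isOpen using 1
      ext H
      simp
    · convert hc.isOpen using 1
      ext H
      simp
  · have h' : ∀ n, ((H.1 : Set G) ∩ V n).Nonempty ↔ ((H'.1 : Set G) ∩ V n).Nonempty :=
      fun n => by simpa using congrFun h n
    exact Subtype.ext (le_antisymm (hle _ _ fun n => (h' n).1) (hle _ _ fun n => (h' n).2))

end ChabautySpace

section Padic

variable {p : ℕ} [hp : Fact p.Prime]

theorem Padic.norm_pow_sub_one_sub_le {x : ℚ_[p]} (hx : ‖x - 1‖ ≤ 1) (c : ℕ) :
    ‖x ^ c - 1 - c * (x - 1)‖ ≤ ‖x - 1‖ ^ 2 := by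
  have hx1 : ‖x‖ ≤ 1 := by
    simpa using (Padic.nonarchimedean (x - 1) 1).trans (max_le hx (by simp))
  induction c with
  | zero => simp
  | succ c ih =>
    have h : x ^ (c + 1) - 1 - ((c + 1 : ℕ) : ℚ_[p]) * (x - 1) =
        (x ^ c - 1 - c * (x - 1)) * x + c * (x - 1) ^ 2 := by push_cast; ring
    rw [h]
    refine (Padic.nonarchimedean _ _).trans (max_le ?_ ?_)
    · rw [norm_mul]
      exact (mul_le_of_le_one_right (norm_nonneg _) hx1).trans ih
    · rw [norm_mul, norm_pow]
      exact mul_le_of_le_one_left (by positivity) (Padic.norm_int_le_one c)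

theorem Padic.norm_pow_sub_one_eq {x : ℚ_[p]} (hx : ‖x - 1‖ < 1) {c : ℕ} (hc : p.Coprime c) :
    ‖x ^ c - 1‖ = ‖x - 1‖ := by
  rcases eq_or_ne (x - 1) 0 with h0 | h0
  · rw [sub_eq_zero.1 h0]; simp
  have h := Padic.norm_pow_sub_one_sub_le hx.le c
  have hpos := norm_pos_iff.2 h0
  have hcx : ‖(c : ℚ_[p]) * (x - 1)‖ = ‖x - 1‖ := by
    rw [norm_mul, Padic.norm_natCast_eq_one_iff.2 hc, one_mul]
  have hlt : ‖x ^ c - 1 - c * (x - 1)‖ < ‖(c : ℚ_[p]) * (x - 1)‖ := by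
    rw [hcx]; nlinarith
  calc ‖x ^ c - 1‖ = ‖(x ^ c - 1 - c * (x - 1)) + c * (x - 1)‖ := by rw [sub_add_cancel]
    _ = max _ _ := IsUltrametricDist.norm_add_eq_max_of_norm_ne_norm hlt.ne
    _ = ‖x - 1‖ := by rw [max_eq_right hlt.le, hcx]

theorem PadicInt.norm_pow_prime_sub_one (hodd : Odd p) {x : ℤ_[p]} (hx : ‖x - 1‖ < 1) :
    ‖x ^ p - 1‖ = (p : ℝ)⁻¹ * ‖x - 1‖ := by
  obtain ⟨b, hb⟩ := (PadicInt.norm_lt_one_iff_dvd _).1 hx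
  obtain ⟨c, hc⟩ := odd_sq_dvd_geom_sum₂_sub (1 : ℤ_[p]) b hodd
  have hx' : 1 + p * b = x := by rw [← hb]; ring
  simp only [hx', one_pow, mul_one] at hc
  have hsum : ∑ i ∈ Finset.range p, x ^ i = p * (1 + p * c) := by linear_combination hc
  have hunit : ‖(1 + p * c : ℤ_[p])‖ = 1 := by
    have hlt : ‖(p * c : ℤ_[p])‖ < 1 := (PadicInt.norm_lt_one_iff_dvd _).2 (dvd_mul_right _ _)
    rw [IsUltrametricDist.norm_add_eq_max_of_norm_ne_norm (by rw [norm_one]; exact hlt.ne'),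
      norm_one, max_eq_left hlt.le]
  rw [← geom_sum_mul, hsum, norm_mul, norm_mul, hunit, PadicInt.norm_p, mul_one]

theorem Padic.norm_pow_prime_sub_one (hodd : Odd p) {x : ℚ_[p]} (hx : ‖x - 1‖ < 1) :
    ‖x ^ p - 1‖ = (p : ℝ)⁻¹ * ‖x - 1‖ := by
  have hx1 : ‖x‖ ≤ 1 := by
    simpa using (Padic.nonarchimedean (x - 1) 1).trans (max_le hx.le (by simp))
  have h := PadicInt.norm_pow_prime_sub_one hodd (x := ⟨x, hx1⟩) hx
  exact h

theorem Padic.exists_norm_eq_inv_pow {x : ℚ_[p]} (h0 : x ≠ 0) (hx : ‖x‖ < 1) :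
    ∃ n : ℕ, ‖x‖ = (p : ℝ)⁻¹ ^ (n + 1) := by
  have hp1 : (1 : ℝ) < p := mod_cast hp.out.one_lt
  rw [Padic.norm_eq_zpow_neg_valuation h0] at hx ⊢
  have hv : 0 < x.valuation := by
    by_contra! h
    exact hx.not_ge (one_le_zpow₀ hp1.le (by omega))
  refine ⟨x.valuation.toNat - 1, ?_⟩
  rw [zpow_neg, ← inv_zpow, ← zpow_natCast]
  congr 1
  omega

theorem Padic.norm_le_inv_of_lt_one {x : ℚ_[p]} (hx : ‖x‖ < 1) : ‖x‖ ≤ (p : ℝ)⁻¹ := by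
  have := (Padic.norm_le_pow_iff_norm_lt_pow_add_one x (-1)).2 (by simpa using hx)
  simpa using this

theorem Padic.exists_nat_norm_sub_lt_one {x : ℚ_[p]} (hx : ‖x‖ ≤ 1) : ∃ c : ℕ, ‖x - c‖ < 1 := by
  obtain ⟨c, -, hc⟩ := PadicInt.exists_mem_range (⟨x, hx⟩ : ℤ_[p])
  rw [IsLocalRing.mem_maximalIdeal, PadicInt.mem_nonunits] at hc
  exact ⟨c, hc⟩

theorem Padic.norm_eq_one_of_norm_sub_one_lt {x : ℚ_[p]} (hx : ‖x - 1‖ < 1) : ‖x‖ = 1 := by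
  have := IsUltrametricDist.norm_add_eq_max_of_norm_ne_norm (x := x - 1) (y := 1)
    (by rw [norm_one]; exact hx.ne)
  rwa [sub_add_cancel, norm_one, max_eq_right hx.le] at this

/-- The group `1 + p ^ (n + 1) ℤ_p` of principal units of level `n + 1`. -/
def principalUnits (p : ℕ) [hp : Fact p.Prime] (n : ℕ) : Subgroup ℚ_[p]ˣ where
  carrier := {x | ‖(x : ℚ_[p]) - 1‖ ≤ (p : ℝ)⁻¹ ^ (n + 1)}
  one_mem' := by simp
  mul_mem' {x y} hx hy := by
    simp only [Set.mem_ofPred_eq] at hx hy ⊢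
    have hx1 : ‖(x : ℚ_[p])‖ = 1 := Padic.norm_eq_one_of_norm_sub_one_lt
      (hx.trans_lt (pow_lt_one₀ (by positivity) (inv_lt_one_of_one_lt₀ (mod_cast hp.out.one_lt))
        (by omega)))
    have h : ((x * y : ℚ_[p]ˣ) : ℚ_[p]) - 1 = x * (y - 1) + (x - 1) := by push_cast; ring
    rw [h]
    refine (Padic.nonarchimedean _ _).trans (max_le ?_ hx)
    rwa [norm_mul, hx1, one_mul]
  inv_mem' {x} hx := by
    simp only [Set.mem_ofPred_eq] at hx ⊢
    have hx1 : ‖(x : ℚ_[p])‖ = 1 := Padic.norm_eq_one_of_norm_sub_one_lt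
      (hx.trans_lt (pow_lt_one₀ (by positivity) (inv_lt_one_of_one_lt₀ (mod_cast hp.out.one_lt))
        (by omega)))
    have h : ((x⁻¹ : ℚ_[p]ˣ) : ℚ_[p]) - 1 = -((x⁻¹ : ℚ_[p]ˣ) : ℚ_[p]) * (x - 1) := by
      rw [neg_mul, mul_sub, Units.inv_mul]; ring
    rw [h, norm_mul, norm_neg, Units.val_inv_eq_inv_val, norm_inv, hx1, inv_one, one_mul]
    exact hx

theorem mem_principalUnits {n : ℕ} {x : ℚ_[p]ˣ} :
    x ∈ principalUnits p n ↔ ‖(x : ℚ_[p]) - 1‖ ≤ (p : ℝ)⁻¹ ^ (n + 1) := Iff.rfl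

theorem mem_principalUnits_zero {x : ℚ_[p]ˣ} :
    x ∈ principalUnits p 0 ↔ ‖(x : ℚ_[p]) - 1‖ < 1 := by
  rw [mem_principalUnits, zero_add, pow_one]
  exact ⟨fun h => h.trans_lt (inv_lt_one_of_one_lt₀ (mod_cast hp.out.one_lt)),
    Padic.norm_le_inv_of_lt_one⟩

theorem principalUnits_antitone : Antitone (principalUnits p) := fun _ _ h _ hx =>
  (mem_principalUnits.1 hx).trans (pow_le_pow_of_le_one (by positivity)
    (inv_lt_one_of_one_lt₀ (mod_cast hp.out.one_lt : (1 : ℝ) < p)).le (by omega))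

theorem norm_sub_one_lt_of_mem {n : ℕ} {x : ℚ_[p]ˣ} (hx : x ∈ principalUnits p n) :
    ‖(x : ℚ_[p]) - 1‖ < 1 :=
  mem_principalUnits_zero.1 (principalUnits_antitone (Nat.zero_le n) hx)

theorem isOpen_principalUnits (n : ℕ) : IsOpen (principalUnits p n : Set ℚ_[p]ˣ) := by
  have hpos : 0 < (p : ℝ)⁻¹ ^ (n + 1) := by have := hp.out.pos; positivity
  have : IsOpen (Metric.closedBall (1 : ℚ_[p]) ((p : ℝ)⁻¹ ^ (n + 1))) :=
    IsUltrametricDist.isOpen_closedBall _ hpos.ne'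
  convert this.preimage Units.continuous_val using 1
  ext x
  simp [mem_principalUnits, dist_eq_norm]

theorem exists_principalUnits_subset {U : Set ℚ_[p]ˣ} (hU : IsOpen U) {x : ℚ_[p]ˣ} (hx : x ∈ U) :
    ∃ n, ∀ u ∈ principalUnits p n, x * u ∈ U := by
  have hV : IsOpen ((x * ·) ⁻¹' U) := hU.preimage (continuous_const_mul x)
  have hV' := Units.isOpenEmbedding_val.isOpenMap _ hV
  obtain ⟨ε, hε, h⟩ := Metric.isOpen_iff.1 hV' 1 ⟨1, by simpa using hx, rfl⟩
  obtain ⟨n, hn⟩ := exists_pow_lt_of_lt_one hε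
    (inv_lt_one_of_one_lt₀ (mod_cast hp.out.one_lt : (1 : ℝ) < p))
  refine ⟨n, fun u hu => ?_⟩
  have hlt : (p : ℝ)⁻¹ ^ (n + 1) < ε := lt_of_le_of_lt (pow_le_pow_of_le_one (by positivity)
    (inv_lt_one_of_one_lt₀ (mod_cast hp.out.one_lt : (1 : ℝ) < p)).le (by omega)) hn
  obtain ⟨v, hv, hvu⟩ := h (show (u : ℚ_[p]) ∈ Metric.ball 1 ε by
    rw [Metric.mem_ball, dist_eq_norm]; exact (mem_principalUnits.1 hu).trans_lt hlt)
  rw [Units.val_inj] at hvu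
  exact hvu ▸ hv

theorem principalUnits_le_of_isClosed (hodd : Odd p) {H : Subgroup ℚ_[p]ˣ}
    (hH : IsClosed (H : Set ℚ_[p]ˣ)) {x : ℚ_[p]ˣ} (hx : x ∈ H) {n : ℕ}
    (hxn : ‖(x : ℚ_[p]) - 1‖ = (p : ℝ)⁻¹ ^ (n + 1)) : principalUnits p n ≤ H := by
  have hp1 : (p : ℝ)⁻¹ < 1 := inv_lt_one_of_one_lt₀ (mod_cast hp.out.one_lt)
  have hp0 : 0 < (p : ℝ)⁻¹ := by have := hp.out.pos; positivity
  have hlevel : ∀ k, ∃ y ∈ H, ‖(y : ℚ_[p]) - 1‖ = (p : ℝ)⁻¹ ^ (n + k + 1) := by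
    intro k
    induction k with
    | zero => exact ⟨x, hx, hxn⟩
    | succ k ih =>
      obtain ⟨y, hy, hyn⟩ := ih
      refine ⟨y ^ p, pow_mem hy p, ?_⟩
      rw [Units.val_pow_eq_pow_val, Padic.norm_pow_prime_sub_one hodd, hyn, ← pow_succ']
      · congr 1
      · rw [hyn]; exact pow_lt_one₀ hp0.le hp1 (by omega)
  intro z hz
  have happrox : ∀ k, ∃ h ∈ H, h⁻¹ * z ∈ principalUnits p (n + k) := by
    intro k
    induction k with
    | zero => exact ⟨1, one_mem H, by simpa using hz⟩
    | succ k ih =>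
      obtain ⟨h, hh, hw⟩ := ih
      obtain ⟨y, hy, hyn⟩ := hlevel k
      set w := h⁻¹ * z with hwdef
      have hy0 : (y : ℚ_[p]) - 1 ≠ 0 := by
        rw [← norm_ne_zero_iff, hyn]; positivity
      obtain ⟨c, hc⟩ := Padic.exists_nat_norm_sub_lt_one
          (x := ((w : ℚ_[p]) - 1) / ((y : ℚ_[p]) - 1)) (by
        rw [norm_div, hyn]
        exact div_le_one_of_le₀ hw (by positivity))
      have hc := Padic.norm_le_inv_of_lt_one hc
      refine ⟨h * y ^ c, mul_mem hh (pow_mem hy c), ?_⟩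
      have hlt : ‖(y : ℚ_[p]) - 1‖ < 1 := by rw [hyn]; exact pow_lt_one₀ hp0.le hp1 (by omega)
      have hyc : ‖((y : ℚ_[p]) ^ c)‖ = 1 := by
        rw [norm_pow, Padic.norm_eq_one_of_norm_sub_one_lt hlt, one_pow]
      have key : ‖(w : ℚ_[p]) - y ^ c‖ ≤ (p : ℝ)⁻¹ ^ (n + (k + 1) + 1) := by
        have heq : (w : ℚ_[p]) - y ^ c = (((w : ℚ_[p]) - 1) / (y - 1) - c) * (y - 1) +
            -((y : ℚ_[p]) ^ c - 1 - c * (y - 1)) := by field_simp; ring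
        rw [heq]
        refine (Padic.nonarchimedean _ _).trans (max_le ?_ ?_)
        · rw [norm_mul, hyn, show n + (k + 1) + 1 = (n + k + 1) + 1 by ring,
            pow_succ' _ (n + k + 1)]
          gcongr
        · rw [norm_neg]
          refine (Padic.norm_pow_sub_one_sub_le hlt.le c).trans ?_
          rw [hyn, ← pow_mul]
          exact pow_le_pow_of_le_one hp0.le hp1.le (by omega)
      have hval : (((h * y ^ c)⁻¹ * z : ℚ_[p]ˣ) : ℚ_[p]) - 1 =
          ((y : ℚ_[p]) ^ c)⁻¹ * (w - y ^ c) := by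
        rw [mul_sub, inv_mul_cancel₀ (pow_ne_zero _ y.ne_zero), hwdef]
        push_cast
        rw [mul_inv]; ring
      rw [mem_principalUnits, hval, norm_mul, norm_inv, hyc, inv_one, one_mul]
      exact key
  have hcl : z ∈ closure (H : Set ℚ_[p]ˣ) := by
    refine mem_closure_iff.2 fun U hU hzU => ?_
    obtain ⟨m, hm⟩ := exists_principalUnits_subset hU hzU
    obtain ⟨h, hh, hw⟩ := happrox m
    refine ⟨h, ?_, hh⟩
    have := hm _ (inv_mem (principalUnits_antitone (Nat.le_add_left m n) hw))
    simpa using this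
  rwa [hH.closure_eq] at hcl

end Padic

section Torsion

variable {p : ℕ} [hp : Fact p.Prime]

theorem coprime_prime_sub_one : p.Coprime (p - 1) := by
  rw [hp.out.coprime_iff_not_dvd]
  have := hp.out.two_le
  exact Nat.not_dvd_of_pos_of_lt (by omega) (by omega)

theorem prime_sub_one_ne_zero : p - 1 ≠ 0 := by
  have := hp.out.two_le
  omega

theorem norm_eq_one_of_mem_rootsOfUnity {d : ℕ} (hd : d ≠ 0) {x : ℚ_[p]ˣ}
    (hx : x ∈ rootsOfUnity d ℚ_[p]) : ‖(x : ℚ_[p])‖ = 1 := by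
  have h : ‖(x : ℚ_[p])‖ ^ d = 1 := by
    rw [← norm_pow, (mem_rootsOfUnity' d x).1 hx, norm_one]
  exact (pow_eq_one_iff_of_nonneg (norm_nonneg _) hd).1 h

theorem eq_one_of_mem_rootsOfUnity {x : ℚ_[p]ˣ} (hx : x ∈ rootsOfUnity (p - 1) ℚ_[p])
    (h : x ∈ principalUnits p 0) : x = 1 := by
  have h' := Padic.norm_pow_sub_one_eq (mem_principalUnits_zero.1 h) coprime_prime_sub_one
  rw [(mem_rootsOfUnity' _ x).1 hx, sub_self, norm_zero, eq_comm, norm_eq_zero, sub_eq_zero] at h'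
  exact Units.ext h'

theorem PadicInt.norm_pow_prime_sub_one_sub_one_lt {x : ℤ_[p]} (hx : ‖x‖ = 1) :
    ‖x ^ (p - 1) - 1‖ < 1 := by
  have hker : ∀ y : ℤ_[p], ‖y‖ < 1 ↔ PadicInt.toZMod y = 0 := fun y => by
    rw [← RingHom.mem_ker, PadicInt.ker_toZMod, IsLocalRing.mem_maximalIdeal,
      PadicInt.mem_nonunits]
  rw [hker, map_sub, map_pow, map_one, ZMod.pow_card_sub_one_eq_one, sub_self]
  exact fun h => ((hker x).2 h).ne hx

theorem pow_mem_principalUnits {x : ℚ_[p]ˣ} (hx : ‖(x : ℚ_[p])‖ = 1) :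
    x ^ (p - 1) ∈ principalUnits p 0 := by
  rw [mem_principalUnits_zero]
  exact PadicInt.norm_pow_prime_sub_one_sub_one_lt (x := (⟨x, hx.le⟩ : ℤ_[p])) hx

theorem exists_mem_rootsOfUnity_norm_sub_lt {x : ℚ_[p]} (hx : ‖x‖ = 1) :
    ∃ ζ ∈ rootsOfUnity (p - 1) ℚ_[p], ‖(ζ : ℚ_[p]) - x‖ < 1 := by
  have hp1 : p - 1 ≠ 0 := prime_sub_one_ne_zero
  let F : Polynomial ℤ_[p] := Polynomial.X ^ (p - 1) - 1
  let a : ℤ_[p] := ⟨x, hx.le⟩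
  have hF : ∀ z : ℤ_[p], Polynomial.aeval z F = z ^ (p - 1) - 1 := fun z => by simp [F]
  have hF' : ‖Polynomial.aeval a (Polynomial.derivative F)‖ = 1 := by
    have : Polynomial.aeval a (Polynomial.derivative F) = (p - 1 : ℕ) * a ^ (p - 1 - 1) := by
      simp [F, Polynomial.derivative_X_pow]
    rw [this, norm_mul, norm_pow, show ‖a‖ = 1 from hx, one_pow, mul_one]
    exact_mod_cast Padic.norm_natCast_eq_one_iff.2 (coprime_prime_sub_one (p := p))
  obtain ⟨z, hz, hza, -, -⟩ := hensels_lemma (F := F) (a := a) (by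
    rw [hF', one_pow, hF]
    exact PadicInt.norm_pow_prime_sub_one_sub_one_lt hx)
  rw [hF, sub_eq_zero] at hz
  rw [hF'] at hza
  have hz' : (z : ℚ_[p]) ^ (p - 1) = 1 := by exact_mod_cast congrArg ((↑) : ℤ_[p] → ℚ_[p]) hz
  refine ⟨Units.ofPowEqOne _ _ hz' hp1, ?_, hza⟩
  rw [mem_rootsOfUnity']
  exact hz'

theorem exists_isPrimitiveRoot_padic : ∃ ζ : ℚ_[p], IsPrimitiveRoot ζ (p - 1) := by
  have hp1 : p - 1 ≠ 0 := prime_sub_one_ne_zero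
  have : NeZero (p - 1) := ⟨hp1⟩
  have hcop : ∀ i : Fin (p - 1), p.Coprime (i + 1) := fun i => by
    rw [hp.out.coprime_iff_not_dvd]
    exact Nat.not_dvd_of_pos_of_lt (by omega) (by omega)
  choose ζ hζ hζi using fun i : Fin (p - 1) =>
    exists_mem_rootsOfUnity_norm_sub_lt (p := p) (x := ((i + 1 : ℕ) : ℚ_[p]))
      (Padic.norm_natCast_eq_one_iff.2 (hcop i))
  have hinj : Function.Injective fun i => (⟨ζ i, hζ i⟩ : rootsOfUnity (p - 1) ℚ_[p]) := by
    intro i j hij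
    have hij' : ζ i = ζ j := congrArg Subtype.val hij
    have h1 := hζi i
    rw [hij', norm_sub_rev] at h1
    have h : ‖(((i + 1 : ℕ) : ℤ) - ((j + 1 : ℕ) : ℤ) : ℤ_[p])‖ < 1 := by
      have := (Padic.nonarchimedean _ _).trans_lt (max_lt h1 (hζi j))
      rw [sub_add_sub_cancel] at this
      rw [PadicInt.norm_def]
      push_cast at this ⊢
      exact this
    rw [← Int.cast_sub, PadicInt.norm_int_lt_one_iff_dvd] at h
    have := Int.eq_zero_of_abs_lt_dvd h (by rw [abs_lt]; omega)
    exact Fin.ext (by omega)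
  have hcard : Nat.card (rootsOfUnity (p - 1) ℚ_[p]) = p - 1 := by
    refine le_antisymm (card_rootsOfUnity _ _) ?_
    simpa using Nat.card_le_card_of_injective _ hinj
  obtain ⟨g, hg⟩ := IsCyclic.exists_ofOrder_eq_natCard (α := rootsOfUnity (p - 1) ℚ_[p])
  refine ⟨((g : ℚ_[p]ˣ) : ℚ_[p]), ?_⟩
  rw [← Subgroup.orderOf_coe, hcard] at hg
  rwa [IsPrimitiveRoot.coe_units_iff, IsPrimitiveRoot.iff_orderOf]

theorem card_rootsOfUnity_padic {d : ℕ} (hd : d ∣ p - 1) :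
    Nat.card (rootsOfUnity d ℚ_[p]) = d := by
  obtain ⟨ζ, hζ⟩ := exists_isPrimitiveRoot_padic (p := p)
  obtain ⟨e, he⟩ := hd
  have hp1 : p - 1 ≠ 0 := prime_sub_one_ne_zero
  have : NeZero d := ⟨by rintro rfl; simp at he; omega⟩
  exact (hζ.pow (Nat.pos_of_ne_zero hp1) (he.trans (mul_comm d e))).card_rootsOfUnity

theorem exists_eq_rootsOfUnity {F : Subgroup ℚ_[p]ˣ} (hF : F ≤ rootsOfUnity (p - 1) ℚ_[p]) :
    ∃ d ∈ (p - 1).divisors, F = rootsOfUnity d ℚ_[p] := by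
  have hp1 : p - 1 ≠ 0 := prime_sub_one_ne_zero
  have : NeZero (p - 1) := ⟨hp1⟩
  have hdvd : Nat.card F ∣ p - 1 := by
    simpa only [card_rootsOfUnity_padic (dvd_refl (p - 1))] using Subgroup.card_dvd_of_le hF
  have : NeZero (Nat.card F) := ⟨fun h => hp1 (by simpa [h] using hdvd)⟩
  refine ⟨Nat.card F, Nat.mem_divisors.2 ⟨hdvd, hp1⟩, ?_⟩
  refine Subgroup.eq_of_le_of_card_ge (fun x hx => ?_) (card_rootsOfUnity_padic hdvd).le
  rw [mem_rootsOfUnity]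
  exact congrArg Subtype.val (pow_card_eq_one' (x := (⟨x, hx⟩ : F)))

end Torsion

section Discrete

variable {p : ℕ} [hp : Fact p.Prime]

open Classical in
/-- The subgroup of `ℚ_p^×` generated by the `d`-th roots of unity and, unless it is zero, `y`. -/
noncomputable def rootPowers (d : ℕ) (y : ℚ_[p]) : Subgroup ℚ_[p]ˣ :=
  if h : y = 0 then rootsOfUnity d ℚ_[p]
  else rootsOfUnity d ℚ_[p] ⊔ Subgroup.zpowers (Units.mk0 y h)

theorem mem_rootPowers {d : ℕ} {y : ℚ_[p]} {g : ℚ_[p]ˣ} :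
    g ∈ rootPowers d y ↔ ∃ f ∈ rootsOfUnity d ℚ_[p], ∃ n : ℕ,
      (g : ℚ_[p]) = f * y ^ n ∨ ((g⁻¹ : ℚ_[p]ˣ) : ℚ_[p]) = f * y ^ n := by
  unfold rootPowers
  split_ifs with h
  · subst h
    constructor
    · exact fun hg => ⟨g, hg, 0, Or.inl (by simp)⟩
    · rintro ⟨f, hf, n, hg⟩
      obtain rfl : n = 0 := by
        by_contra hn
        rw [zero_pow hn, mul_zero] at hg
        exact hg.elim g.ne_zero (Units.ne_zero _)
      simp only [pow_zero, mul_one, Units.val_inj] at hg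
      rcases hg with rfl | hg
      · exact hf
      · rwa [← hg, inv_mem_iff] at hf
  · rw [Subgroup.mem_sup]
    constructor
    · rintro ⟨f, hf, _, ⟨i, rfl⟩, rfl⟩
      obtain ⟨n, rfl | rfl⟩ := i.eq_nat_or_neg
      · exact ⟨f, hf, n, Or.inl (by simp)⟩
      · exact ⟨f⁻¹, inv_mem hf, n, Or.inr (by simp [mul_comm])⟩
    · rintro ⟨f, hf, n, hg | hg⟩
      · exact ⟨f, hf, _, ⟨(n : ℤ), rfl⟩, Units.ext (by simp [hg])⟩
      · refine ⟨f⁻¹, inv_mem hf, _, ⟨-(n : ℤ), rfl⟩, ?_⟩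
        rw [← inv_inj]
        exact Units.ext (by simp [hg, mul_comm])

theorem mem_rootsOfUnity_of_mem_rootPowers {d : ℕ} (hd : d ≠ 0) {y : ℚ_[p]} (hy : ‖y‖ < 1)
    {g : ℚ_[p]ˣ} (hg : g ∈ rootPowers d y) (hg1 : ‖(g : ℚ_[p])‖ = 1) :
    g ∈ rootsOfUnity d ℚ_[p] := by
  have key : ∀ h : ℚ_[p]ˣ, ‖(h : ℚ_[p])‖ = 1 → ∀ f ∈ rootsOfUnity d ℚ_[p], ∀ n : ℕ,
      (h : ℚ_[p]) = f * y ^ n → h ∈ rootsOfUnity d ℚ_[p] := by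
    intro h hh f hf n hfn
    obtain rfl : n = 0 := by
      by_contra hn
      rw [hfn, norm_mul, norm_eq_one_of_mem_rootsOfUnity hd hf, one_mul, norm_pow] at hh
      exact (pow_lt_one₀ (norm_nonneg _) hy hn).ne hh
    rw [pow_zero, mul_one, Units.val_inj] at hfn
    rwa [hfn]
  obtain ⟨f, hf, n, h | h⟩ := mem_rootPowers.1 hg
  · exact key g hg1 f hf n h
  · exact inv_mem_iff.1 (key g⁻¹ (by rw [Units.val_inv_eq_inv_val, norm_inv, hg1, inv_one])
      f hf n h)

theorem exists_mem_principalUnits_ne_one (n : ℕ) :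
    ∃ u ∈ principalUnits p n, ‖(u : ℚ_[p]) - 1‖ = (p : ℝ)⁻¹ ^ (n + 1) := by
  have hlt : ‖(p : ℚ_[p]) ^ (n + 1)‖ < 1 := by
    rw [norm_pow]
    exact pow_lt_one₀ (norm_nonneg _) Padic.norm_p_lt_one (by omega)
  have h0 : (1 + (p : ℚ_[p]) ^ (n + 1)) ≠ 0 := by
    rw [← norm_ne_zero_iff, Padic.norm_eq_one_of_norm_sub_one_lt (by simpa using hlt)]
    exact one_ne_zero
  have h : ‖((Units.mk0 _ h0 : ℚ_[p]ˣ) : ℚ_[p]) - 1‖ = (p : ℝ)⁻¹ ^ (n + 1) := by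
    rw [Units.val_mk0, add_sub_cancel_left, norm_pow, Padic.norm_p]
  exact ⟨_, h.le, h⟩

theorem not_isOpen_of_inf_principalUnits {H : Subgroup ℚ_[p]ˣ}
    (h : ∀ x ∈ H, x ∈ principalUnits p 0 → x = 1) : ¬IsOpen (H : Set ℚ_[p]ˣ) := by
  intro hH
  obtain ⟨n, hn⟩ := exists_principalUnits_subset hH (one_mem H)
  obtain ⟨u, hu, hu1⟩ := exists_mem_principalUnits_ne_one (p := p) n
  have := hn u hu
  rw [one_mul] at this
  rw [h u this (principalUnits_antitone (Nat.zero_le n) hu), Units.val_one, sub_self,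
    norm_zero] at hu1
  have hp0 := hp.out.pos
  have : (0 : ℝ) < (p : ℝ)⁻¹ ^ (n + 1) := by positivity
  exact this.ne hu1

theorem isClosed_of_inf_principalUnits {H : Subgroup ℚ_[p]ˣ}
    (h : ∀ x ∈ H, x ∈ principalUnits p 0 → x = 1) : IsClosed (H : Set ℚ_[p]ˣ) := by
  have : DiscreteTopology H := by
    refine discreteTopology_of_isOpen_singleton_one ?_
    convert (isOpen_principalUnits (p := p) 0).preimage (continuous_subtype_val (p := (· ∈ H)))
      using 1
    ext x
    refine ⟨by rintro rfl; exact one_mem (principalUnits p 0), fun hx => Subtype.ext (h x x.2 hx)⟩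
  exact Subgroup.isClosed_of_discrete

theorem eq_one_of_mem_of_not_isOpen (hodd : Odd p) {H : Subgroup ℚ_[p]ˣ}
    (hH : IsClosed (H : Set ℚ_[p]ˣ)) (hno : ¬IsOpen (H : Set ℚ_[p]ˣ)) {x : ℚ_[p]ˣ} (hx : x ∈ H)
    (hx0 : x ∈ principalUnits p 0) : x = 1 := by
  by_contra hne
  have hne' : (x : ℚ_[p]) - 1 ≠ 0 := fun h => hne (Units.ext (sub_eq_zero.1 h))
  obtain ⟨n, hn⟩ := Padic.exists_norm_eq_inv_pow hne' (mem_principalUnits_zero.1 hx0)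
  exact hno (Subgroup.isOpen_mono (principalUnits_le_of_isClosed hodd hH hx hn)
    (isOpen_principalUnits n))

theorem eq_one_of_mem_rootPowers {d : ℕ} (hd : d ∣ p - 1) {y : ℚ_[p]} (hy : ‖y‖ < 1) :
    ∀ x ∈ rootPowers d y, x ∈ principalUnits p 0 → x = 1 := by
  intro x hx hx0
  have hd0 : d ≠ 0 := ne_zero_of_dvd_ne_zero prime_sub_one_ne_zero hd
  refine eq_one_of_mem_rootsOfUnity (rootsOfUnity_le_of_dvd hd ?_) hx0
  exact mem_rootsOfUnity_of_mem_rootPowers hd0 hy hx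
    (Padic.norm_eq_one_of_norm_sub_one_lt (mem_principalUnits_zero.1 hx0))

/-- The `p`-adic valuation on `ℚ_p^×` as a homomorphism. -/
noncomputable def unitsValuation (p : ℕ) [hp : Fact p.Prime] : ℚ_[p]ˣ →* Multiplicative ℤ where
  toFun x := Multiplicative.ofAdd (x : ℚ_[p]).valuation
  map_one' := by simp
  map_mul' x y := by
    rw [Units.val_mul, Padic.valuation_mul x.ne_zero y.ne_zero, ofAdd_add]

theorem unitsValuation_eq_one_iff {x : ℚ_[p]ˣ} : unitsValuation p x = 1 ↔ ‖(x : ℚ_[p])‖ = 1 := by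
  have hp1 : (1 : ℝ) < p := mod_cast hp.out.one_lt
  rw [Padic.norm_eq_zpow_neg_valuation x.ne_zero, zpow_eq_one_iff_right₀ (by positivity) hp1.ne',
    neg_eq_zero]
  exact ofAdd_eq_one

theorem exists_eq_rootPowers_of_not_isOpen (hodd : Odd p) {H : Subgroup ℚ_[p]ˣ}
    (hH : IsClosed (H : Set ℚ_[p]ˣ)) (hno : ¬IsOpen (H : Set ℚ_[p]ˣ)) :
    ∃ d ∈ (p - 1).divisors, ∃ y : ℚ_[p], ‖y‖ < 1 ∧ H = rootPowers d y := by
  have hroot : ∀ x ∈ H, ‖(x : ℚ_[p])‖ = 1 → x ∈ rootsOfUnity (p - 1) ℚ_[p] := fun x hx hx1 =>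
    (mem_rootsOfUnity _ x).2
      (eq_one_of_mem_of_not_isOpen hodd hH hno (pow_mem hx _) (pow_mem_principalUnits hx1))
  obtain ⟨d, hd, hHd⟩ := exists_eq_rootsOfUnity
    (inf_le_right : H ⊓ rootsOfUnity (p - 1) ℚ_[p] ≤ rootsOfUnity (p - 1) ℚ_[p])
  have hdH : rootsOfUnity d ℚ_[p] ≤ H := hHd ▸ inf_le_left
  have hroot' : ∀ x ∈ H, ‖(x : ℚ_[p])‖ = 1 → x ∈ rootsOfUnity d ℚ_[p] := fun x hx hx1 =>
    hHd ▸ ⟨hx, hroot x hx hx1⟩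
  refine ⟨d, hd, ?_⟩
  by_cases hnorm : ∀ x ∈ H, ‖(x : ℚ_[p])‖ = 1
  · refine ⟨0, by simp, ?_⟩
    rw [rootPowers, dif_pos rfl]
    exact le_antisymm (fun x hx => hroot' x hx (hnorm x hx)) hdH
  · push Not at hnorm
    obtain ⟨x, hx, hx1⟩ := hnorm
    obtain ⟨⟨v, hv⟩, hgen⟩ := IsCyclic.exists_generator (α := H.map (unitsValuation p))
    obtain ⟨z, hz, rfl⟩ := hv
    have hzpow : ∀ h ∈ H, ∃ i : ℤ, ‖((h * z ^ i : ℚ_[p]ˣ) : ℚ_[p])‖ = 1 := by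
      intro h hh
      obtain ⟨i, hi⟩ := hgen ⟨unitsValuation p h, h, hh, rfl⟩
      refine ⟨-i, unitsValuation_eq_one_iff.1 ?_⟩
      have hi' : unitsValuation p z ^ i = unitsValuation p h := congrArg Subtype.val hi
      rw [map_mul, map_zpow, zpow_neg, hi', mul_inv_cancel]
    have hz1 : ‖(z : ℚ_[p])‖ ≠ 1 := by
      intro h1
      obtain ⟨i, hi⟩ := hzpow x hx
      rw [Units.val_mul, norm_mul, Units.val_zpow_eq_zpow_val, norm_zpow, h1, one_zpow,
        mul_one] at hi
      exact hx1 hi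
    obtain ⟨y, hy, hy1, hypow⟩ : ∃ y ∈ H, ‖(y : ℚ_[p])‖ < 1 ∧
        ∀ h ∈ H, ∃ i : ℤ, ‖((h * y ^ i : ℚ_[p]ˣ) : ℚ_[p])‖ = 1 := by
      rcases hz1.lt_or_gt with h | h
      · exact ⟨z, hz, h, hzpow⟩
      · refine ⟨z⁻¹, inv_mem hz, ?_, fun g hg => ?_⟩
        · rw [Units.val_inv_eq_inv_val, norm_inv]
          exact inv_lt_one_of_one_lt₀ h
        · obtain ⟨i, hi⟩ := hzpow g hg
          exact ⟨-i, by simpa using hi⟩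
    refine ⟨y, hy1, ?_⟩
    rw [rootPowers, dif_neg y.ne_zero, Units.mk0_val]
    refine le_antisymm (fun h hh => ?_) (sup_le hdH (Subgroup.zpowers_le.2 hy))
    obtain ⟨i, hi⟩ := hypow h hh
    exact Subgroup.mem_sup.2 ⟨_, hroot' _ (mul_mem hh (zpow_mem hy i)) hi, (y ^ i)⁻¹,
      inv_mem ⟨i, rfl⟩, by simp⟩

theorem exists_eq_mul_of_rootPowers_eq {d : ℕ} (hd : d ≠ 0) {y y' : ℚ_[p]} (hy : ‖y‖ < 1)
    (hy' : ‖y'‖ < 1) (h : rootPowers d y = rootPowers d y') :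
    ∃ f ∈ rootsOfUnity d ℚ_[p], y' = f * y := by
  have key : ∀ {a b : ℚ_[p]}, ‖a‖ < 1 → ‖b‖ < 1 → b ≠ 0 → rootPowers d b = rootPowers d a →
      ∃ f ∈ rootsOfUnity d ℚ_[p], ∃ n : ℕ, b = f * a ^ (n + 1) := by
    intro a b ha hb hb0 hab
    have hmem : Units.mk0 b hb0 ∈ rootPowers d a := hab ▸ mem_rootPowers.2
      ⟨1, one_mem _, 1, Or.inl (by simp)⟩
    obtain ⟨f, hf, n, hn | hn⟩ := mem_rootPowers.1 hmem
    · rw [Units.val_mk0] at hn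
      cases n with
      | zero =>
        rw [hn, pow_zero, mul_one, norm_eq_one_of_mem_rootsOfUnity hd hf] at hb
        exact absurd hb (lt_irrefl _)
      | succ n => exact ⟨f, hf, n, hn⟩
    · have h1 := congrArg norm hn
      rw [Units.val_inv_eq_inv_val, Units.val_mk0, norm_inv, norm_mul, norm_pow,
        norm_eq_one_of_mem_rootsOfUnity hd hf, one_mul] at h1
      exact absurd (h1.trans_le (pow_le_one₀ (norm_nonneg _) ha.le))
        ((one_lt_inv₀ (norm_pos_iff.2 hb0)).2 hb).not_ge
  rcases eq_or_ne y' 0 with rfl | hy0'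
  · rcases eq_or_ne y 0 with rfl | hy0
    · exact ⟨1, one_mem _, by simp⟩
    · obtain ⟨f, -, n, hn⟩ := key hy' hy hy0 h
      simp at hn
      exact absurd hn hy0
  · obtain ⟨f, hf, n, hn⟩ := key hy hy' hy0' h.symm
    have hy0 : y ≠ 0 := by rintro rfl; simp at hn; exact hy0' hn
    obtain ⟨f', hf', m, hm⟩ := key hy' hy hy0 h
    have h1 := congrArg norm hn
    have h2 := congrArg norm hm
    rw [norm_mul, norm_pow, norm_eq_one_of_mem_rootsOfUnity hd ‹_›, one_mul] at h1 h2
    rcases Nat.eq_zero_or_pos n with rfl | hn0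
    · exact ⟨f, hf, by simpa using hn⟩
    · have h3 := pow_lt_self_of_lt_one₀ (norm_pos_iff.2 hy0) hy (show 1 < n + 1 by omega)
      have h4 := pow_le_of_le_one (norm_nonneg _) hy'.le (show m + 1 ≠ 0 by omega)
      exact absurd h3 (by rw [← h1]; exact (h2.trans_le h4).not_gt)

end Discrete

section NonOpen

variable {p : ℕ} [hp : Fact p.Prime]

instance : CompactSpace (Metric.ball (0 : ℚ_[p]) 1) :=
  isCompact_iff_compactSpace.1
    (Metric.isCompact_of_isClosed_isBounded (IsUltrametricDist.isClosed_ball _ _)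
      Metric.isBounded_ball)

theorem norm_lt_one_of_mem_ball (y : Metric.ball (0 : ℚ_[p]) 1) : ‖(y : ℚ_[p])‖ < 1 :=
  mem_ball_zero_iff.1 y.2

instance : TotallyDisconnectedSpace ℚ_[p]ˣ :=
  ⟨Units.isOpenEmbedding_val.isEmbedding.isTotallyDisconnected_range.1
    (isTotallyDisconnected_of_totallyDisconnectedSpace _) |>.isTotallyDisconnected_univ⟩

instance : SecondCountableTopology ℚ_[p]ˣ :=
  Units.isOpenEmbedding_val.isEmbedding.secondCountableTopology

/-- The group generated by `d`-th roots of unity and `y` as a point of the Chabauty space. -/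
noncomputable def rootPowersPoint {d : ℕ} (hd : d ∣ p - 1) (y : Metric.ball (0 : ℚ_[p]) 1) :
    ChabautySpace ℚ_[p]ˣ :=
  ⟨rootPowers d y, isClosed_of_inf_principalUnits
    (eq_one_of_mem_rootPowers hd (norm_lt_one_of_mem_ball y))⟩

theorem not_isOpen_rootPowers {d : ℕ} (hd : d ∣ p - 1) {y : ℚ_[p]} (hy : ‖y‖ < 1) :
    ¬IsOpen (rootPowers d y : Set ℚ_[p]ˣ) :=
  not_isOpen_of_inf_principalUnits (eq_one_of_mem_rootPowers hd hy)

/-- The values of the elements of `V` and of their inverses. -/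
def symmetricValues (V : Set ℚ_[p]ˣ) : Set ℚ_[p] :=
  Units.val '' V ∪ Units.val '' (Inv.inv '' V)

theorem rootPowers_inter_nonempty_iff {d : ℕ} {y : ℚ_[p]} {V : Set ℚ_[p]ˣ} :
    ((rootPowers d y : Set ℚ_[p]ˣ) ∩ V).Nonempty ↔
      ∃ f ∈ rootsOfUnity d ℚ_[p], ∃ n : ℕ, (f : ℚ_[p]) * y ^ n ∈ symmetricValues V := by
  constructor
  · rintro ⟨g, hg, hgV⟩
    obtain ⟨f, hf, n, h | h⟩ := mem_rootPowers.1 hg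
    · exact ⟨f, hf, n, Or.inl ⟨g, hgV, h⟩⟩
    · exact ⟨f, hf, n, Or.inr ⟨g⁻¹, ⟨g, hgV, rfl⟩, h⟩⟩
  · rintro ⟨f, hf, n, ⟨g, hgV, h⟩ | ⟨_, ⟨g, hgV, rfl⟩, h⟩⟩
    · exact ⟨g, mem_rootPowers.2 ⟨f, hf, n, Or.inl h⟩, hgV⟩
    · exact ⟨g, mem_rootPowers.2 ⟨f, hf, n, Or.inr h⟩, hgV⟩

theorem isOpen_symmetricValues {U : Set ℚ_[p]ˣ} (hU : IsOpen U) :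
    IsOpen (symmetricValues U) :=
  (Units.isOpenEmbedding_val.isOpenMap _ hU).union
    (Units.isOpenEmbedding_val.isOpenMap _ ((Homeomorph.inv _).isOpenMap _ hU))

theorem isCompact_symmetricValues {K : Set ℚ_[p]ˣ} (hK : IsCompact K) :
    IsCompact (symmetricValues K) :=
  (hK.image Units.continuous_val).union ((hK.image continuous_inv).image Units.continuous_val)

theorem zero_notMem_symmetricValues (K : Set ℚ_[p]ˣ) : (0 : ℚ_[p]) ∉ symmetricValues K := by
  rintro (⟨g, -, h⟩ | ⟨g, -, h⟩) <;> exact g.ne_zero h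

theorem finite_rootsOfUnity (d : ℕ) [NeZero d] : (rootsOfUnity d ℚ_[p] : Set ℚ_[p]ˣ).Finite :=
  Set.finite_coe_iff.1 (inferInstanceAs (Finite (rootsOfUnity d ℚ_[p])))

theorem continuous_rootPowersPoint {d : ℕ} (hd : d ∣ p - 1) :
    Continuous (rootPowersPoint hd) := by
  have hd0 : d ≠ 0 := ne_zero_of_dvd_ne_zero prime_sub_one_ne_zero hd
  have : NeZero d := ⟨hd0⟩
  have hmono : ∀ (f : ℚ_[p]ˣ) (n : ℕ),
      Continuous fun y : Metric.ball (0 : ℚ_[p]) 1 => (f : ℚ_[p]) * (y : ℚ_[p]) ^ n :=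
    fun f n => by fun_prop
  refine continuous_generateFrom_iff.2 ?_
  rintro _ (⟨K, hK, rfl⟩ | ⟨U, hU, rfl⟩)
  · have hC := (isCompact_symmetricValues hK).isClosed
    obtain ⟨ε, hε, hball⟩ := Metric.isOpen_iff.1 hC.isOpen_compl 0 (zero_notMem_symmetricValues K)
    have hp1 : (p : ℝ)⁻¹ < 1 := inv_lt_one_of_one_lt₀ (mod_cast hp.out.one_lt)
    obtain ⟨N, hN⟩ := exists_pow_lt_of_lt_one hε hp1
    have : rootPowersPoint hd ⁻¹' {H : ChabautySpace ℚ_[p]ˣ | (H.1 : Set ℚ_[p]ˣ) ∩ K = ∅} =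
        ⋂ f ∈ (rootsOfUnity d ℚ_[p] : Set ℚ_[p]ˣ), ⋂ n ∈ Set.Iio N,
          (fun y : Metric.ball (0 : ℚ_[p]) 1 => (f : ℚ_[p]) * (y : ℚ_[p]) ^ n) ⁻¹'
            (symmetricValues K)ᶜ := by
      ext y
      simp only [Set.mem_preimage, Set.mem_ofPred_eq, Set.mem_iInter, Set.mem_compl_iff,
        ← Set.not_nonempty_iff_eq_empty, Set.mem_Iio]
      change ¬((rootPowers d (y : ℚ_[p]) : Set ℚ_[p]ˣ) ∩ K).Nonempty ↔ _
      rw [rootPowers_inter_nonempty_iff]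
      push Not
      refine ⟨fun h f hf n _ => h f hf n, fun h f hf n => ?_⟩
      by_cases hn : n < N
      · exact h f hf n hn
      · refine hball (mem_ball_zero_iff.2 ?_)
        rw [norm_mul, norm_eq_one_of_mem_rootsOfUnity hd0 hf, one_mul, norm_pow]
        calc ‖(y : ℚ_[p])‖ ^ n ≤ (p : ℝ)⁻¹ ^ n := by
              gcongr; exact Padic.norm_le_inv_of_lt_one (norm_lt_one_of_mem_ball y)
          _ ≤ (p : ℝ)⁻¹ ^ N := pow_le_pow_of_le_one (by positivity) hp1.le (not_lt.1 hn)
          _ < ε := hN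
    rw [this]
    exact (finite_rootsOfUnity d).isOpen_biInter fun f _ =>
      (Set.finite_Iio N).isOpen_biInter fun n _ => hC.isOpen_compl.preimage (hmono f n)
  · have : rootPowersPoint hd ⁻¹' {H : ChabautySpace ℚ_[p]ˣ | ((H.1 : Set ℚ_[p]ˣ) ∩ U).Nonempty} =
        ⋃ f ∈ (rootsOfUnity d ℚ_[p] : Set ℚ_[p]ˣ), ⋃ n : ℕ,
          (fun y : Metric.ball (0 : ℚ_[p]) 1 => (f : ℚ_[p]) * (y : ℚ_[p]) ^ n) ⁻¹'
            symmetricValues U := by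
      ext y
      simp only [Set.mem_preimage, Set.mem_ofPred_eq, Set.mem_iUnion]
      change ((rootPowers d (y : ℚ_[p]) : Set ℚ_[p]ˣ) ∩ U).Nonempty ↔ _
      rw [rootPowers_inter_nonempty_iff]
      simp
    rw [this]
    exact isOpen_biUnion fun f _ => isOpen_iUnion fun n =>
      (isOpen_symmetricValues hU).preimage (hmono f n)

variable (p) in
/-- The space of closed subgroups of `ℚ_p^×` that are not open. -/
abbrev NonOpenSubgroups : Type :=
  {H : ChabautySpace ℚ_[p]ˣ // ¬IsOpen (H.1 : Set ℚ_[p]ˣ)}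

/-- `rootPowersPoint` as a map to the space of closed subgroups that are not open. -/
noncomputable def nonOpenPoint {d : ℕ} (hd : d ∣ p - 1) (y : Metric.ball (0 : ℚ_[p]) 1) :
    NonOpenSubgroups p :=
  ⟨rootPowersPoint hd y, not_isOpen_rootPowers hd (norm_lt_one_of_mem_ball y)⟩

theorem continuous_nonOpenPoint {d : ℕ} (hd : d ∣ p - 1) : Continuous (nonOpenPoint hd) :=
  (continuous_rootPowersPoint hd).subtype_mk _

theorem exists_eq_nonOpenPoint (hodd : Odd p) (x : NonOpenSubgroups p) :
    ∃ (d : (p - 1).divisors) (y : _), x = nonOpenPoint (Nat.dvd_of_mem_divisors d.2) y := by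
  obtain ⟨d, hd, y, hy, h⟩ := exists_eq_rootPowers_of_not_isOpen hodd x.1.2 x.2
  exact ⟨⟨d, hd⟩, ⟨y, mem_ball_zero_iff.2 hy⟩, Subtype.ext (Subtype.ext h)⟩

theorem compactSpace_nonOpenSubgroups (hodd : Odd p) : CompactSpace (NonOpenSubgroups p) := by
  refine ⟨?_⟩
  have : (Set.univ : Set (NonOpenSubgroups p)) = ⋃ d : (p - 1).divisors,
      Set.range (nonOpenPoint (Nat.dvd_of_mem_divisors d.2)) := by
    refine (Set.eq_univ_of_forall fun x => ?_).symm
    obtain ⟨d, y, rfl⟩ := exists_eq_nonOpenPoint hodd x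
    exact Set.mem_iUnion.2 ⟨d, y, rfl⟩
  rw [this]
  exact isCompact_iUnion fun d => isCompact_range (continuous_nonOpenPoint _)

theorem not_isOpen_singleton_nonOpenSubgroups (hodd : Odd p) (x : NonOpenSubgroups p) :
    ¬IsOpen {x} := by
  intro hx
  obtain ⟨⟨d, hdm⟩, y, rfl⟩ := exists_eq_nonOpenPoint hodd x
  have hd := Nat.dvd_of_mem_divisors hdm
  have hd0 : d ≠ 0 := ne_zero_of_dvd_ne_zero prime_sub_one_ne_zero hd
  have : NeZero d := ⟨hd0⟩
  have hopen := Metric.isOpen_ball.isOpenMap_subtype_val _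
    (hx.preimage (continuous_nonOpenPoint hd))
  refine infinite_of_mem_nhds (y : ℚ_[p]) (hopen.mem_nhds ⟨y, rfl, rfl⟩) ?_
  refine ((finite_rootsOfUnity (p := p) d).image
    fun f : ℚ_[p]ˣ => (f : ℚ_[p]) * (y : ℚ_[p])).subset ?_
  rintro _ ⟨y', hy', rfl⟩
  have h : rootPowers d (y' : ℚ_[p]) = rootPowers d (y : ℚ_[p]) :=
    congrArg (fun z : NonOpenSubgroups p => z.1.1) hy'
  obtain ⟨f, hf, hfy⟩ := exists_eq_mul_of_rootPowers_eq hd0 (norm_lt_one_of_mem_ball y)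
    (norm_lt_one_of_mem_ball y') h.symm
  exact ⟨f, hf, hfy.symm⟩

theorem nonempty_nonOpenSubgroups_homeomorph (hodd : Odd p) :
    Nonempty (NonOpenSubgroups p ≃ₜ (ℕ → Bool)) := by
  obtain ⟨e, he, hinj⟩ := ChabautySpace.exists_continuous_injective ℚ_[p]ˣ
  have := compactSpace_nonOpenSubgroups hodd
  have : Nonempty (NonOpenSubgroups p) :=
    ⟨nonOpenPoint (one_dvd _) ⟨0, mem_ball_zero_iff.2 (by simp)⟩⟩
  exact nonempty_homeomorph_cantor (he.comp continuous_subtype_val)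
    (hinj.comp Subtype.val_injective) (not_isOpen_singleton_nonOpenSubgroups hodd)

end NonOpen

section OpenInfiniteIndex

variable {p : ℕ} [hp : Fact p.Prime]

theorem norm_eq_one_of_index_eq_zero {H : Subgroup ℚ_[p]ˣ} (hH : IsOpen (H : Set ℚ_[p]ˣ))
    (hindex : H.index = 0) : ∀ x ∈ H, ‖(x : ℚ_[p])‖ = 1 := by
  by_contra! hne
  obtain ⟨x, hx, hx1⟩ := hne
  have hx0 : 0 < ‖(x : ℚ_[p])‖ := norm_pos_iff.2 x.ne_zero
  obtain ⟨y, hy, hy1⟩ : ∃ y ∈ H, 1 < ‖(y : ℚ_[p])‖ := by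
    rcases hx1.lt_or_gt with h | h
    · refine ⟨x⁻¹, inv_mem hx, ?_⟩
      rw [Units.val_inv_eq_inv_val, norm_inv]
      exact (one_lt_inv₀ hx0).2 h
    · exact ⟨x, hx, h⟩
  have hcompact : IsCompact {g : ℚ_[p]ˣ | 1 ≤ ‖(g : ℚ_[p])‖ ∧ ‖(g : ℚ_[p])‖ ≤ ‖(y : ℚ_[p])‖} := by
    rw [Units.isOpenEmbedding_val.isEmbedding.isCompact_iff]
    have : Units.val '' {g : ℚ_[p]ˣ | 1 ≤ ‖(g : ℚ_[p])‖ ∧ ‖(g : ℚ_[p])‖ ≤ ‖(y : ℚ_[p])‖} =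
        {g : ℚ_[p] | 1 ≤ ‖g‖} ∩ Metric.closedBall 0 ‖(y : ℚ_[p])‖ := by
      ext g
      constructor
      · rintro ⟨g, ⟨h1, h2⟩, rfl⟩
        exact ⟨h1, mem_closedBall_zero_iff.2 h2⟩
      · rintro ⟨h1, h2⟩
        have hg : g ≠ 0 := by
          rintro rfl
          rw [Set.mem_ofPred_eq, norm_zero] at h1
          linarith
        exact ⟨Units.mk0 g hg, ⟨h1, mem_closedBall_zero_iff.1 h2⟩, rfl⟩
    rw [this]
    exact (isCompact_closedBall _ _).inter_left (isClosed_le continuous_const continuous_norm)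
  have : DiscreteTopology (ℚ_[p]ˣ ⧸ H) := QuotientGroup.discreteTopology hH
  have himage : QuotientGroup.mk '' {g : ℚ_[p]ˣ | 1 ≤ ‖(g : ℚ_[p])‖ ∧
      ‖(g : ℚ_[p])‖ ≤ ‖(y : ℚ_[p])‖} = (Set.univ : Set (ℚ_[p]ˣ ⧸ H)) := by
    refine Set.eq_univ_of_forall fun q => ?_
    obtain ⟨g, rfl⟩ := QuotientGroup.mk_surjective q
    obtain ⟨i, hi, hi'⟩ := exists_mem_Ico_zpow (norm_pos_iff.2 g.ne_zero) hy1
    have hyi : 0 < ‖(y : ℚ_[p])‖ ^ i := zpow_pos (by linarith) i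
    have hval : ‖((g * y ^ (-i) : ℚ_[p]ˣ) : ℚ_[p])‖ = ‖(g : ℚ_[p])‖ / ‖(y : ℚ_[p])‖ ^ i := by
      rw [Units.val_mul, norm_mul, Units.val_zpow_eq_zpow_val, norm_zpow, zpow_neg, div_eq_mul_inv]
    refine ⟨g * y ^ (-i), ⟨?_, ?_⟩, ?_⟩
    · rw [hval, one_le_div₀ hyi]
      exact hi
    · rw [hval, div_le_iff₀ hyi, ← zpow_one_add₀ (by linarith), add_comm]
      exact hi'.le
    · rw [QuotientGroup.eq]
      simpa using zpow_mem hy i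
  have hfin := (hcompact.image (f := (QuotientGroup.mk : ℚ_[p]ˣ → ℚ_[p]ˣ ⧸ H))
    continuous_quotient_mk').finite_of_discrete
  rw [himage, Set.finite_univ_iff] at hfin
  exact Subgroup.index_ne_zero_of_finite hindex

/-- The subgroup of `ℚ_p^×` generated by the `d`-th roots of unity and `1 + p ^ (n + 1) ℤ_p`. -/
noncomputable def rootUnits (p : ℕ) [hp : Fact p.Prime] (d n : ℕ) : Subgroup ℚ_[p]ˣ :=
  rootsOfUnity d ℚ_[p] ⊔ principalUnits p n

theorem isOpen_rootUnits (d n : ℕ) : IsOpen (rootUnits p d n : Set ℚ_[p]ˣ) :=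
  Subgroup.isOpen_mono le_sup_right (isOpen_principalUnits n)

theorem norm_eq_one_of_mem_rootUnits {d : ℕ} (hd : d ≠ 0) {n : ℕ} {x : ℚ_[p]ˣ}
    (hx : x ∈ rootUnits p d n) : ‖(x : ℚ_[p])‖ = 1 := by
  obtain ⟨f, hf, u, hu, rfl⟩ := Subgroup.mem_sup.1 hx
  rw [Units.val_mul, norm_mul, norm_eq_one_of_mem_rootsOfUnity hd hf,
    Padic.norm_eq_one_of_norm_sub_one_lt (norm_sub_one_lt_of_mem hu), one_mul]

theorem index_rootUnits {d : ℕ} (hd : d ≠ 0) (n : ℕ) : (rootUnits p d n).index = 0 := by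
  by_contra h
  have hp0 : (p : ℚ_[p]) ≠ 0 := mod_cast hp.out.ne_zero
  obtain ⟨k, hk, -, hmem⟩ := Subgroup.exists_pow_mem_of_index_ne_zero h (Units.mk0 _ hp0)
  have h1 := norm_eq_one_of_mem_rootUnits hd hmem
  rw [Units.val_pow_eq_pow_val, Units.val_mk0, norm_pow] at h1
  exact (pow_lt_one₀ (norm_nonneg _) Padic.norm_p_lt_one hk.ne').ne h1

theorem rootUnits_inf_rootsOfUnity {d : ℕ} (hd : d ∣ p - 1) (n : ℕ) :
    rootUnits p d n ⊓ rootsOfUnity (p - 1) ℚ_[p] = rootsOfUnity d ℚ_[p] := by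
  have hle : rootsOfUnity d ℚ_[p] ≤ rootsOfUnity (p - 1) ℚ_[p] := rootsOfUnity_le_of_dvd hd
  refine le_antisymm ?_ (le_inf le_sup_left hle)
  rintro x ⟨hx, hxr⟩
  obtain ⟨f, hf, u, hu, rfl⟩ := Subgroup.mem_sup.1 hx
  have hur : u ∈ rootsOfUnity (p - 1) ℚ_[p] := (Subgroup.mul_mem_cancel_left _ (hle hf)).1 hxr
  rwa [eq_one_of_mem_rootsOfUnity hur (principalUnits_antitone (Nat.zero_le n) hu), mul_one]

theorem rootUnits_inf_principalUnits {d : ℕ} (hd : d ∣ p - 1) (n : ℕ) :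
    rootUnits p d n ⊓ principalUnits p 0 = principalUnits p n := by
  have hle : principalUnits p n ≤ principalUnits p 0 := principalUnits_antitone (Nat.zero_le n)
  refine le_antisymm ?_ (le_inf le_sup_right hle)
  rintro x ⟨hx, hx0⟩
  obtain ⟨f, hf, u, hu, rfl⟩ := Subgroup.mem_sup.1 hx
  have hf0 : f ∈ principalUnits p 0 := (Subgroup.mul_mem_cancel_right _ (hle hu)).1 hx0
  rwa [eq_one_of_mem_rootsOfUnity (rootsOfUnity_le_of_dvd hd hf) hf0, one_mul]

theorem principalUnits_injective : Function.Injective (principalUnits p) := by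
  have key : ∀ n m, principalUnits p n ≤ principalUnits p m → m ≤ n := by
    intro n m h
    obtain ⟨u, hu, hu1⟩ := exists_mem_principalUnits_ne_one (p := p) n
    have hle := mem_principalUnits.1 (h hu)
    rw [hu1, pow_le_pow_iff_right_of_lt_one₀ (by have := hp.out.pos; positivity)
      (inv_lt_one_of_one_lt₀ (mod_cast hp.out.one_lt))] at hle
    omega
  exact fun n m h => le_antisymm (key m n h.ge) (key n m h.le)

theorem eq_of_rootsOfUnity_eq {d d' : ℕ} (hd : d ∣ p - 1) (hd' : d' ∣ p - 1)
    (h : rootsOfUnity d ℚ_[p] = rootsOfUnity d' ℚ_[p]) : d = d' := by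
  rw [← card_rootsOfUnity_padic hd, ← card_rootsOfUnity_padic hd', h]

theorem rootUnits_eq_iff {d d' n n' : ℕ} (hd : d ∣ p - 1) (hd' : d' ∣ p - 1) :
    rootUnits p d n = rootUnits p d' n' ↔ d = d' ∧ n = n' := by
  refine ⟨fun h => ⟨eq_of_rootsOfUnity_eq hd hd' ?_, principalUnits_injective (p := p) ?_⟩, ?_⟩
  · rw [← rootUnits_inf_rootsOfUnity hd n, h, rootUnits_inf_rootsOfUnity hd']
  · rw [← rootUnits_inf_principalUnits hd n, h, rootUnits_inf_principalUnits hd']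
  · rintro ⟨rfl, rfl⟩
    rfl

theorem exists_eq_rootUnits (hodd : Odd p) {H : Subgroup ℚ_[p]ˣ} (hH : IsOpen (H : Set ℚ_[p]ˣ))
    (hindex : H.index = 0) : ∃ d ∈ (p - 1).divisors, ∃ n, H = rootUnits p d n := by
  classical
  have hnorm := norm_eq_one_of_index_eq_zero hH hindex
  obtain ⟨d, hd, hHd⟩ := exists_eq_rootsOfUnity
    (inf_le_right : H ⊓ rootsOfUnity (p - 1) ℚ_[p] ≤ rootsOfUnity (p - 1) ℚ_[p])
  have hex : ∃ n, principalUnits p n ≤ H := by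
    obtain ⟨n, hn⟩ := exists_principalUnits_subset hH (one_mem H)
    exact ⟨n, fun u hu => by simpa using hn u hu⟩
  obtain ⟨n, hn, hmin⟩ : ∃ n, principalUnits p n ≤ H ∧ ∀ m, principalUnits p m ≤ H → n ≤ m :=
    ⟨Nat.find hex, Nat.find_spec hex, fun m hm => Nat.find_min' hex hm⟩
  have hinf : ∀ x ∈ H, x ∈ principalUnits p 0 → x ∈ principalUnits p n := by
    intro x hx hx0
    rcases eq_or_ne ((x : ℚ_[p]) - 1) 0 with h | h
    · rw [show x = 1 from Units.ext (sub_eq_zero.1 h)]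
      exact one_mem _
    · obtain ⟨m, hm⟩ := Padic.exists_norm_eq_inv_pow h (mem_principalUnits_zero.1 hx0)
      exact principalUnits_antitone
        (hmin m (principalUnits_le_of_isClosed hodd (H.isClosed_of_isOpen hH) hx hm)) hm.le
  refine ⟨d, hd, n, le_antisymm (fun x hx => ?_) (sup_le (hHd ▸ inf_le_left) hn)⟩
  have hx1 := hnorm x hx
  obtain ⟨ζ, hζ, hζx⟩ := exists_mem_rootsOfUnity_norm_sub_lt hx1
  have hζ1 := norm_eq_one_of_mem_rootsOfUnity prime_sub_one_ne_zero hζ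
  have hu0 : ‖((ζ⁻¹ * x : ℚ_[p]ˣ) : ℚ_[p]) - 1‖ < 1 := by
    have : ((ζ⁻¹ * x : ℚ_[p]ˣ) : ℚ_[p]) - 1 = -((ζ⁻¹ : ℚ_[p]ˣ) : ℚ_[p]) * (ζ - x) := by
      rw [neg_mul, mul_sub, Units.inv_mul, Units.val_mul]; ring
    rwa [this, norm_mul, norm_neg, Units.val_inv_eq_inv_val, norm_inv, hζ1, inv_one, one_mul]
  have hpow : (ζ⁻¹ * x) ^ (p - 1) = x ^ (p - 1) := by
    rw [mul_pow, inv_pow, (mem_rootsOfUnity _ ζ).1 hζ, inv_one, one_mul]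
  have hun : ζ⁻¹ * x ∈ principalUnits p n := by
    have h := hinf _ (pow_mem hx (p - 1)) (pow_mem_principalUnits hx1)
    rwa [← hpow, mem_principalUnits, Units.val_pow_eq_pow_val,
      Padic.norm_pow_sub_one_eq hu0 coprime_prime_sub_one] at h
  have hζH : ζ ∈ H := by
    have := mul_mem hx (inv_mem (hn hun))
    simpa using this
  exact Subgroup.mem_sup.2 ⟨ζ, hHd ▸ ⟨hζH, hζ⟩, ζ⁻¹ * x, hun, by simp⟩

/-- `rootUnits` as points of the Chabauty space, completed by their limit. -/
noncomputable def rootUnitsPoint {d : ℕ} (hd : d ∣ p - 1) (n : OnePoint ℕ) :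
    ChabautySpace ℚ_[p]ˣ :=
  n.elim (rootPowersPoint hd ⟨0, mem_ball_zero_iff.2 (by simp)⟩)
    fun n => ⟨rootUnits p d n, Subgroup.isClosed_of_isOpen _ (isOpen_rootUnits d n)⟩

theorem rootPowers_zero (d : ℕ) : rootPowers d (0 : ℚ_[p]) = rootsOfUnity d ℚ_[p] :=
  dif_pos rfl

theorem continuous_rootUnitsPoint {d : ℕ} (hd : d ∣ p - 1) : Continuous (rootUnitsPoint hd) := by
  have : NeZero d := ⟨ne_zero_of_dvd_ne_zero prime_sub_one_ne_zero hd⟩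
  refine (OnePoint.continuous_iff_from_nat _).2
    (TopologicalSpace.tendsto_nhds_generateFrom_iff.2 ?_)
  rintro _ (⟨K, hK, rfl⟩ | ⟨U, hU, rfl⟩) hmem
  · replace hmem : (rootPowers d (0 : ℚ_[p]) : Set ℚ_[p]ˣ) ∩ K = ∅ := hmem
    rw [rootPowers_zero] at hmem
    have hlevel : ∀ f ∈ (rootsOfUnity d ℚ_[p] : Set ℚ_[p]ˣ), ∀ᶠ n in Filter.atTop,
        ∀ u ∈ principalUnits p n, f * u ∉ K := by
      intro f hf
      obtain ⟨m, hm⟩ := exists_principalUnits_subset hK.isClosed.isOpen_compl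
        (show f ∈ Kᶜ from fun hfK => (Set.eq_empty_iff_forall_notMem.1 hmem f) ⟨hf, hfK⟩)
      filter_upwards [Filter.eventually_ge_atTop m] with n hn u hu
      exact hm u (principalUnits_antitone hn hu)
    filter_upwards [(Filter.eventually_all_finite (finite_rootsOfUnity d)).2 hlevel] with n hn
    refine Set.eq_empty_iff_forall_notMem.2 ?_
    rintro x ⟨hx, hxK⟩
    obtain ⟨f, hf, u, hu, rfl⟩ := Subgroup.mem_sup.1 hx
    exact hn f hf u hu hxK
  · replace hmem : ((rootPowers d (0 : ℚ_[p]) : Set ℚ_[p]ˣ) ∩ U).Nonempty := hmem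
    rw [rootPowers_zero] at hmem
    obtain ⟨f, hf, hfU⟩ := hmem
    exact Filter.Eventually.of_forall fun n =>
      ⟨f, (le_sup_left : rootsOfUnity d ℚ_[p] ≤ rootUnits p d n) hf, hfU⟩

end OpenInfiniteIndex

/-- For `p` an odd prime and `G = ℚ_p^×`, with `N` the set of open finite-index subgroups,
`C(G) ∖ N` is homeomorphic to the space obtained by glueing `[d(p-1)] × ℕ̄` on the Cantor
space `{0,1}^ℕ`, the `d(p-1)` accumulation points `(i, ∞)` being identified with `d(p-1)`
pairwise distinct points of the Cantor space. -/
theorem chabauty_padicUnits_minus_N_odd (p : ℕ) [Fact p.Prime] (hp : Odd p) :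
    ∃ c : Fin (p - 1).divisors.card → (ℕ → Bool), Function.Injective c ∧
      Nonempty (
        {H : ChabautySpace ℚ_[p]ˣ | ¬(IsOpen (H.1 : Set ℚ_[p]ˣ) ∧ H.1.index ≠ 0)} ≃ₜ
        Quot (fun x y : (ℕ → Bool) ⊕ (Fin (p - 1).divisors.card × OnePoint ℕ) =>
          ∃ i, x = Sum.inl (c i) ∧ y = Sum.inr (i, ∞))) := by
  obtain ⟨φ⟩ := nonempty_nonOpenSubgroups_homeomorph (p := p) hp
  let σ : Fin (p - 1).divisors.card ≃ (p - 1).divisors := (p - 1).divisors.equivFin.symm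
  have hσ : ∀ i, ((σ i : ℕ)) ∣ p - 1 := fun i => Nat.dvd_of_mem_divisors (σ i).2
  have hσ0 : ∀ i, (σ i : ℕ) ≠ 0 := fun i => ne_zero_of_dvd_ne_zero prime_sub_one_ne_zero (hσ i)
  let o : Metric.ball (0 : ℚ_[p]) 1 := ⟨0, mem_ball_zero_iff.2 (by simp)⟩
  let c : Fin (p - 1).divisors.card → (ℕ → Bool) := fun i => φ (nonOpenPoint (hσ i) o)
  refine ⟨c, fun i j hij => ?_, ?_⟩
  · have h : rootPowers (σ i) (0 : ℚ_[p]) = rootPowers (σ j) (0 : ℚ_[p]) :=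
      congrArg (fun z : NonOpenSubgroups p => z.1.1) (φ.injective hij)
    rw [rootPowers_zero, rootPowers_zero] at h
    exact σ.injective (Subtype.ext (eq_of_rootsOfUnity_eq (hσ i) (hσ j) h))
  let Y := {H : ChabautySpace ℚ_[p]ˣ | ¬(IsOpen (H.1 : Set ℚ_[p]ˣ) ∧ H.1.index ≠ 0)}
  have hbranch : ∀ i n, rootUnitsPoint (hσ i) n ∈ Y := by
    intro i n
    induction n using OnePoint.rec with
    | infty => exact fun h => not_isOpen_rootPowers (hσ i) (norm_lt_one_of_mem_ball o) h.1
    | coe n => exact fun h => h.2 (index_rootUnits (hσ0 i) n)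
  let Ψ : (ℕ → Bool) ⊕ (Fin (p - 1).divisors.card × OnePoint ℕ) → Y :=
    Sum.elim (fun t => ⟨(φ.symm t).1, fun h => (φ.symm t).2 h.1⟩)
      fun q => ⟨rootUnitsPoint (hσ q.1) q.2, hbranch q.1 q.2⟩
  have hΨ : Continuous Ψ := by
    refine continuous_sumElim.2 ⟨?_, ?_⟩
    · exact (continuous_subtype_val.comp φ.symm.continuous).subtype_mk _
    · refine Continuous.subtype_mk (continuous_prod_of_discrete_left.2 fun i => ?_) _
      exact continuous_rootUnitsPoint (hσ i)
  let r := fun x y : (ℕ → Bool) ⊕ (Fin (p - 1).divisors.card × OnePoint ℕ) =>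
    ∃ i, x = Sum.inl (c i) ∧ y = Sum.inr (i, ∞)
  have hr : ∀ x y, r x y → Ψ x = Ψ y := by
    rintro _ _ ⟨i, rfl, rfl⟩
    refine Subtype.ext ?_
    change (φ.symm (c i)).1 = rootPowersPoint (hσ i) o
    rw [φ.symm_apply_apply]
    rfl
  have hnormal : ∀ q : Quot r, (∃ t, q = Quot.mk r (Sum.inl t)) ∨
      ∃ i, ∃ n : ℕ, q = Quot.mk r (Sum.inr (i, (n : OnePoint ℕ))) := by
    intro q
    obtain ⟨t | ⟨i, n⟩, rfl⟩ := Quot.exists_rep q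
    · exact Or.inl ⟨t, rfl⟩
    · induction n using OnePoint.rec with
      | infty => exact Or.inl ⟨c i, (Quot.sound ⟨i, rfl, rfl⟩).symm⟩
      | coe n => exact Or.inr ⟨i, n, rfl⟩
  have hne : ∀ t i, ∀ n : ℕ, Ψ (Sum.inl t) ≠ Ψ (Sum.inr (i, (n : OnePoint ℕ))) := by
    intro t i n h
    have h' : (φ.symm t).1.1 = rootUnits p (σ i) n := congrArg (fun z : Y => z.1.1) h
    exact (φ.symm t).2 (h' ▸ isOpen_rootUnits (σ i : ℕ) n)
  have hinj : Function.Injective (Quot.lift Ψ hr) := by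
    intro a b hab
    rcases hnormal a with ⟨t, rfl⟩ | ⟨i, n, rfl⟩ <;> rcases hnormal b with ⟨s, rfl⟩ | ⟨j, m, rfl⟩
    · have h : (φ.symm t).1 = (φ.symm s).1 := congrArg (fun z : Y => z.1) hab
      rw [φ.symm.injective (Subtype.ext h)]
    · exact absurd hab (hne t j m)
    · exact absurd hab.symm (hne s i n)
    · have h : rootUnits p (σ i) n = rootUnits p (σ j) m := congrArg (fun z : Y => z.1.1) hab
      obtain ⟨hij, rfl⟩ := (rootUnits_eq_iff (hσ i) (hσ j)).1 h
      rw [σ.injective (Subtype.ext hij)]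
  have hsurj : Function.Surjective (Quot.lift Ψ hr) := by
    rintro ⟨H, hH⟩
    by_cases hopen : IsOpen (H.1 : Set ℚ_[p]ˣ)
    · obtain ⟨d, hd, n, h⟩ := exists_eq_rootUnits hp hopen (not_not.1 fun h => hH ⟨hopen, h⟩)
      refine ⟨Quot.mk r (Sum.inr (σ.symm ⟨d, hd⟩, (n : OnePoint ℕ))), ?_⟩
      refine Subtype.ext (Subtype.ext ?_)
      change rootUnits p (σ (σ.symm ⟨d, hd⟩)) n = H.1
      rw [h, σ.apply_symm_apply]
    · refine ⟨Quot.mk r (Sum.inl (φ ⟨H, hopen⟩)), Subtype.ext ?_⟩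
      change (φ.symm (φ ⟨H, hopen⟩)).1 = H
      rw [φ.symm_apply_apply]
  obtain ⟨e, he, heinj⟩ := ChabautySpace.exists_continuous_injective ℚ_[p]ˣ
  have : T2Space (ChabautySpace ℚ_[p]ˣ) := T2Space.of_injective_continuous heinj he
  exact ⟨((continuous_quot_lift hr hΨ).homeoOfEquivCompactToT2
    (f := Equiv.ofBijective _ ⟨hinj, hsurj⟩)).symm⟩
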